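/- Let Λ ⊆ ℝ^{n} × ℝ^{m} with Λ ⊆ ℝ^{n} × R for some R ⊆ ℝ^{m}, let r ∈ ℝ^{m}, and let r* ∈ R be a minimizer of s ↦ ‖s − r‖ over R. Let f : ℝ^{n} × ℝ^{m} → ℝ^{n} satisfy: (x, v) ∈ Λ implies (f(x, v), v) ∈ Λ. Let Λ be convex, and let g : ℝ^{n} → ℝ^{m} satisfy: whenever S_v(Λ, x) = {s : (x, s) ∈ Λ} is nonempty, g(x) is the unique minimizer of s ↦ ‖s − r‖ over S_v(Λ, x). Define the closed-loop sequences v_k = g(x_k), x_{k+1} = f(x_k, v_k) with S_v(Λ, x_0) ≠ ∅. If x_k → x̄ as k → ∞ for some x̄ with (x̄, r*) ∈ interior(Λ), then there exists t ∈ ℕ such that v_k = r* for all k ≥ t. -/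

import Mathlib

open Filter Set Topology

/-- The feasibility governor of the feasible set `Λ` of pairs (state, reference), for a cost `J` on
references (in the paper, the distance to the target reference): `g x` is the unique minimizer of
`J` over the slice of `Λ` at `x`. Where that slice is empty, `g x` is arbitrary. -/
def IsFeasibilityGovernor {X V β : Type*} [LT β] (Λ : Set (X × V)) (J : V → β) (g : X → V) :
    Prop :=
  ∀ x, (Prod.mk x ⁻¹' Λ).Nonempty → (x, g x) ∈ Λ ∧ ∀ s, (x, s) ∈ Λ → s ≠ g x → J (g x) < J s

section

variable {X V β : Type*} [Preorder β] {Λ : Set (X × V)} {J : V → β} {g : X → V}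

theorem IsFeasibilityGovernor.apply_eq_of_isMinOn (hg : IsFeasibilityGovernor Λ J g) {x : X} {s : V}
    (hs : (x, s) ∈ Λ) (hmin : IsMinOn J (Prod.mk x ⁻¹' Λ) s) : g x = s := by
  obtain ⟨hmem, hlt⟩ := hg x ⟨s, hs⟩
  by_contra hne
  exact (hlt s hs (Ne.symm hne)).not_ge (hmin hmem)

theorem fg_finite_time_convergence_general [TopologicalSpace X]
    (hg : IsFeasibilityGovernor Λ J g) {rstar : V} (hmin : IsMinOn J (Prod.snd '' Λ) rstar)
    {xbar : X} (hxbar : (·, rstar) ⁻¹' Λ ∈ 𝓝 xbar)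
    {ι : Type*} {l : Filter ι} {x : ι → X} (hlim : Tendsto x l (𝓝 xbar)) :
    ∀ᶠ k in l, g (x k) = rstar := by
  filter_upwards [hlim hxbar] with k hk
  exact hg.apply_eq_of_isMinOn hk (hmin.on_subset fun _ hs => mem_image_of_mem Prod.snd hs)

end

/-- Abstract form of Theorem 4 (finite-time convergence of the auxiliary
reference). -/
theorem fg_finite_time_convergence
    {n m : ℕ}
    (Λ : Set (EuclideanSpace ℝ (Fin n) × EuclideanSpace ℝ (Fin m)))
    (R : Set (EuclideanSpace ℝ (Fin m)))
    (hΛR : Λ ⊆ {p | p.2 ∈ R})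
    (r : EuclideanSpace ℝ (Fin m))
    (rstar : EuclideanSpace ℝ (Fin m)) (hrstar : rstar ∈ R)
    (hmin : ∀ s ∈ R, ‖rstar - r‖ ≤ ‖s - r‖)
    (f : EuclideanSpace ℝ (Fin n) → EuclideanSpace ℝ (Fin m) → EuclideanSpace ℝ (Fin n))
    (hf : ∀ x v, (x, v) ∈ Λ → (f x v, v) ∈ Λ)
    (hΛ : Convex ℝ Λ)
    (g : EuclideanSpace ℝ (Fin n) → EuclideanSpace ℝ (Fin m))
    (hg : ∀ x : EuclideanSpace ℝ (Fin n), {s | (x, s) ∈ Λ}.Nonempty →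
      (x, g x) ∈ Λ ∧ ∀ s, (x, s) ∈ Λ → s ≠ g x → ‖g x - r‖ < ‖s - r‖)
    (x : ℕ → EuclideanSpace ℝ (Fin n))
    (v : ℕ → EuclideanSpace ℝ (Fin m))
    (hv : ∀ k, v k = g (x k))
    (hx : ∀ k, x (k + 1) = f (x k) (v k))
    (h0 : {s | (x 0, s) ∈ Λ}.Nonempty)
    (xbar : EuclideanSpace ℝ (Fin n))
    (hxbar : (xbar, rstar) ∈ interior Λ)
    (hlim : Filter.Tendsto x Filter.atTop (nhds xbar)) :
    ∃ t : ℕ, ∀ k ≥ t, v k = rstar := by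
  have hnhds : (·, rstar) ⁻¹' Λ ∈ 𝓝 xbar :=
    (Continuous.prodMk_left rstar).continuousAt (mem_interior_iff_mem_nhds.1 hxbar)
  simpa only [hv] using eventually_atTop.1 <| fg_finite_time_convergence_general
    (J := fun s => ‖s - r‖) hg (.on_subset hmin (image_subset_iff.2 hΛR)) hnhds hlim
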